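/- Let (ε_t)_{t ∈ ℤ} be i.i.d. real random variables with mean zero and common variance σ² ∈ (0, ∞), let ρ ∈ (−1, 1) and μ ∈ ℝ, and define X_n = μ + Σ_{j=0}^∞ ρ^j ε_{n−j} for n ≥ 1. Then the sample mean X̄_n = (1/n) Σ_{i=1}^n X_i converges to μ in probability as n → ∞. -/

import Mathlib

open MeasureTheory ProbabilityTheory Filter

/-- The `L¹` norm of a centred random variable is at most its standard deviation. -/
lemma lintegral_enorm_le_sqrt_variance {Ω : Type*} [MeasurableSpace Ω] {P : Measure Ω}
    [IsProbabilityMeasure P] {Y : Ω → ℝ} (hY : MemLp Y 2 P) (hmean : ∫ ω, Y ω ∂P = 0) :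
    ∫⁻ ω, ‖Y ω‖ₑ ∂P ≤ ENNReal.ofReal √(variance Y P) := by
  rw [← ofReal_integral_norm_eq_lintegral_enorm (hY.integrable one_le_two)]
  refine ENNReal.ofReal_le_ofReal (Real.le_sqrt_of_sq_le ?_)
  have h := variance_nonneg (fun ω => ‖Y ω‖) P
  rw [variance_eq_sub hY.norm] at h
  rw [variance_of_integral_eq_zero hY.aemeasurable hmean]
  simpa using h

/-- The `L¹` norm of a sum of `n` pairwise independent centred variables of variance `v` is at
most `√(n v)`. -/
lemma lintegral_enorm_sum_le_sqrt {Ω ι : Type*} [MeasurableSpace Ω] {P : Measure Ω}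
    [IsProbabilityMeasure P] {Y : ι → Ω → ℝ} {s : Finset ι} {v : ℝ}
    (hL2 : ∀ i ∈ s, MemLp (Y i) 2 P) (hmean : ∀ i ∈ s, ∫ ω, Y i ω ∂P = 0)
    (hvar : ∀ i ∈ s, variance (Y i) P = v)
    (hindep : Set.Pairwise ↑s fun i j => IndepFun (Y i) (Y j) P) :
    ∫⁻ ω, ‖∑ i ∈ s, Y i ω‖ₑ ∂P ≤ ENNReal.ofReal √(s.card * v) := by
  have h := lintegral_enorm_le_sqrt_variance (memLp_finsetSum' s hL2) (by
    simp only [Finset.sum_apply]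
    rw [integral_finsetSum s fun i hi => (hL2 i hi).integrable one_le_two]
    exact Finset.sum_eq_zero hmean)
  rw [IndepFun.variance_sum hL2 hindep, Finset.sum_congr rfl hvar] at h
  simpa using h

/-- A geometrically weighted series of variables bounded in `L¹` is bounded in `L¹`. -/
lemma lintegral_tsum_enorm_pow_mul_le {Ω : Type*} [MeasurableSpace Ω] {P : Measure Ω}
    {Y : ℕ → Ω → ℝ} (hY : ∀ j, Measurable (Y j)) (ρ : ℝ) {C : ENNReal}
    (hC : ∀ j, ∫⁻ ω, ‖Y j ω‖ₑ ∂P ≤ C) :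
    ∫⁻ ω, ∑' j : ℕ, ‖ρ ^ j * Y j ω‖ₑ ∂P ≤ (1 - ‖ρ‖ₑ)⁻¹ * C := by
  rw [lintegral_tsum fun j => by fun_prop, ← ENNReal.tsum_geometric, ← ENNReal.tsum_mul_right]
  refine ENNReal.tsum_le_tsum fun j => ?_
  simp only [enorm_mul, enorm_pow]
  rw [lintegral_const_mul _ (hY j).enorm]
  gcongr
  exact hC j

/-- For the AR(1)-type linear process `X_n = μ + ∑_{j≥0} ρ^j ε_{n−j}` with
i.i.d. mean-zero innovations of variance `σ² ∈ (0,∞)` and `ρ ∈ (−1,1)`, the sample mean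
`X̄_n = (1/n) ∑_{i=1}^n X_i` converges to `μ` in probability. -/
theorem sample_mean_linear_process_tendsto_in_measure
    {Ω : Type*} [MeasurableSpace Ω] (P : Measure Ω) [IsProbabilityMeasure P]
    (ε : ℤ → Ω → ℝ) (hmeas : ∀ t, Measurable (ε t))
    (hindep : iIndepFun ε P)
    (hident : ∀ s t : ℤ, IdentDistrib (ε s) (ε t) P P)
    (hL2 : ∀ t, MemLp (ε t) 2 P)
    (hmean : ∀ t, ∫ ω, ε t ω ∂P = 0)
    (σ2 : ℝ) (hσ2 : 0 < σ2) (hvar : ∀ t, variance (ε t) P = σ2)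
    (ρ : ℝ) (hρ : ρ ∈ Set.Ioo (-1 : ℝ) 1) (μ : ℝ)
    (X : ℕ → Ω → ℝ)
    (hX : ∀ n ω, X n ω = μ + ∑' j : ℕ, ρ ^ j * ε ((n : ℤ) - j) ω) :
    TendstoInMeasure P (fun (n : ℕ) ω => (1 / (n : ℝ)) * ∑ i ∈ Finset.Icc (1:ℕ) n, X i ω)
      atTop (fun _ => μ) := by
  have hK : (1 - ‖ρ‖ₑ)⁻¹ ≠ ⊤ := by
    rw [ENNReal.inv_ne_top, ← pos_iff_ne_zero, tsub_pos_iff_lt, Real.enorm_eq_ofReal_abs,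
      ENNReal.ofReal_lt_one]
    exact abs_lt.mpr hρ
  have hsummable : ∀ᵐ ω ∂P, ∀ n : ℕ, Summable fun j : ℕ => ρ ^ j * ε ((n : ℤ) - j) ω := by
    rw [ae_all_iff]
    intro n
    have hle := lintegral_tsum_enorm_pow_mul_le (P := P) (Y := fun j : ℕ => ε ((n : ℤ) - j))
      (fun j => hmeas _) ρ (C := ENNReal.ofReal √σ2)
      (fun j => hvar ((n : ℤ) - j) ▸ lintegral_enorm_le_sqrt_variance (hL2 _) (hmean _))
    filter_upwards [ae_lt_top (by fun_prop)
      (ne_top_of_le_ne_top (ENNReal.mul_ne_top hK ENNReal.ofReal_ne_top) hle)] with ω hω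
    exact (tsum_enorm_ne_top_iff_summable_norm.mp hω.ne).of_norm
  -- `S n j` is the sample mean of the innovations `j` steps in the past.
  let S : ℕ → ℕ → Ω → ℝ := fun n j ω =>
    (1 / (n : ℝ)) * ∑ i ∈ Finset.Icc (1 : ℕ) n, ε ((i : ℤ) - j) ω
  have hSmeas (n j : ℕ) : Measurable (S n j) := by fun_prop
  have hSbound (n j : ℕ) :
      ∫⁻ ω, ‖S n j ω‖ₑ ∂P ≤ ENNReal.ofReal (1 / (n : ℝ) * √(n * σ2)) := by
    simp only [S, enorm_mul]
    rw [lintegral_const_mul _ (by fun_prop), ENNReal.ofReal_mul (by positivity),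
      Real.enorm_of_nonneg (by positivity)]
    gcongr
    refine (lintegral_enorm_sum_le_sqrt (v := σ2) (fun i _ => hL2 _) (fun i _ => hmean _)
      (fun i _ => hvar _) fun i _ k _ hik => hindep.indepFun (by omega)).trans_eq ?_
    simp
  have hrate : Tendsto (fun n : ℕ => (1 - ‖ρ‖ₑ)⁻¹ * ENNReal.ofReal (1 / (n : ℝ) * √(n * σ2)))
      atTop (nhds 0) := by
    have hreal : Tendsto (fun n : ℕ => 1 / (n : ℝ) * √(n * σ2)) atTop (nhds 0) := by
      have h : Tendsto (fun n : ℕ => √(σ2 / n)) atTop (nhds 0) := by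
        simpa using (tendsto_const_div_atTop_nhds_zero_nat σ2).sqrt
      refine h.congr fun n => ?_
      rw [Real.sqrt_div hσ2.le, Real.sqrt_mul (Nat.cast_nonneg n), ← mul_assoc, one_div,
        inv_mul_eq_div, Real.sqrt_div_self, div_eq_inv_mul]
    simpa using ENNReal.Tendsto.const_mul (ENNReal.tendsto_ofReal hreal) (Or.inr hK)
  have hdist (n : ℕ) (hn : n ≠ 0) : ∀ᵐ ω ∂P,
      edist ((1 / (n : ℝ)) * ∑ i ∈ Finset.Icc (1 : ℕ) n, X i ω) μ
        ≤ ∑' j : ℕ, ‖ρ ^ j * S n j ω‖ₑ := by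
    filter_upwards [hsummable] with ω hω
    have heq : (1 / (n : ℝ)) * ∑ i ∈ Finset.Icc (1 : ℕ) n, X i ω - μ
        = ∑' j : ℕ, ρ ^ j * S n j ω := by
      have hn' : (n : ℝ) ≠ 0 := Nat.cast_ne_zero.mpr hn
      have hμ : (1 / (n : ℝ)) * (n * μ) = μ := by field_simp
      simp only [hX, Finset.sum_add_distrib, Finset.sum_const, Nat.card_Icc, add_tsub_cancel_right,
        nsmul_eq_mul, mul_add, hμ, add_sub_cancel_left]
      rw [← Summable.tsum_finsetSum fun i _ => hω i, ← tsum_mul_left]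
      refine tsum_congr fun j => ?_
      rw [← Finset.mul_sum, mul_left_comm]
    rw [edist_eq_enorm_sub, heq]
    exact enorm_tsum_le_tsum_enorm
  refine tendstoInMeasure_of_ne_top fun δ hδ hδ_top => ?_
  have hlim := ENNReal.Tendsto.div_const hrate (b := δ) (Or.inr hδ.ne')
  rw [ENNReal.zero_div] at hlim
  refine tendsto_of_tendsto_of_tendsto_of_le_of_le' tendsto_const_nhds hlim
    (Eventually.of_forall fun _ => zero_le) ?_
  filter_upwards [eventually_ne_atTop 0] with n hn
  calc P {ω | δ ≤ edist ((1 / (n : ℝ)) * ∑ i ∈ Finset.Icc (1 : ℕ) n, X i ω) μ}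
      ≤ P {ω | δ ≤ ∑' j : ℕ, ‖ρ ^ j * S n j ω‖ₑ} :=
        measure_mono_ae ((hdist n hn).mono fun ω hω h => le_trans h hω)
    _ ≤ (∫⁻ ω, ∑' j : ℕ, ‖ρ ^ j * S n j ω‖ₑ ∂P) / δ :=
        meas_ge_le_lintegral_div (by fun_prop) hδ.ne' hδ_top
    _ ≤ _ := ENNReal.div_le_div_right
        (lintegral_tsum_enorm_pow_mul_le (hSmeas n) ρ (hSbound n)) δ
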